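/- arXiv:1709.00524 — 9 statements merged into one kernel-verified Lean document; each statement's English description precedes it below -/
import Mathlib

section
/- Let x be a real number and let α, ω₁, ω₂ be pairwise distinct complex numbers satisfying α+ω₁+ω₂ = x², αω₁+αω₂+ω₁ω₂ = -x, and αω₁ω₂ = 1 (i.e., the roots of λ³ - x²λ² - xλ - 1 = 0). Then for every natural number n, the Tribonacci polynomial satisfies the Binet formula T_n(x) = α^{n+1}/((α-ω₁)(α-ω₂)) - ω₁^{n+1}/((α-ω₁)(ω₁-ω₂)) + ω₂^{n+1}/((α-ω₂)(ω₁-ω₂)), where T_n(x) is regarded as a complex number. -/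
/-- Tribonacci polynomials: T₀=0, T₁=1, T₂=x², Tₙ₊₃ = x²Tₙ₊₂ + xTₙ₊₁ + Tₙ. -/
def Trib (x : ℝ) : ℕ → ℝ
  | 0 => 0
  | 1 => 1
  | 2 => x ^ 2
  | n + 3 => x ^ 2 * Trib x (n + 2) + x * Trib x (n + 1) + Trib x n

/-- Tribonacci quaternion polynomials Q_{T,n}(x). -/
noncomputable def QT (x : ℝ) (n : ℕ) : Quaternion ℝ :=
  ⟨Trib x n, Trib x (n + 1), Trib x (n + 2), Trib x (n + 3)⟩

/-!
Geometric sequences at roots of the characteristic polynomial solve a linear recurrence, so when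
the `d` characteristic roots `v i` are distinct, `n ↦ ∑ i, v i ^ n / ∏ j ≠ i, (v i - v j)` is a
solution. For `n < d` this sum is the coefficient of `X ^ (d - 1)` in the Lagrange interpolant of
`X ^ n` at the nodes `v i`, which is `X ^ n` itself; so the initial values are `0, …, 0, 1`. The
Tribonacci polynomials, preceded by one more `0`, are the solution of order three with these
initial values.
-/

open Finset Polynomial

theorem isSolution_sum_mul_pow {ι R : Type*} [CommRing R] {E : LinearRecurrence R}
    {s : Finset ι} {v : ι → R} (hroot : ∀ i ∈ s, E.charPoly.IsRoot (v i)) (c : ι → R) :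
    E.IsSolution fun n ↦ ∑ i ∈ s, c i * v i ^ n := by
  have hcomb : (fun n ↦ ∑ i ∈ s, c i * v i ^ n) = ∑ i ∈ s, c i • fun n ↦ v i ^ n := by
    ext n
    simp
  rw [hcomb, E.is_sol_iff_mem_solSpace]
  exact sum_mem fun i hi ↦
    E.solSpace.smul_mem _ ((E.geom_sol_iff_root_charPoly _).mpr (hroot i hi))

section DistinctRoots

variable {ι K : Type*} [DecidableEq ι] [Field K] {s : Finset ι} {v : ι → K}

theorem sum_pow_div_prod_sub_of_lt_card (hv : Set.InjOn v s) {k : ℕ} (hk : k < #s) :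
    ∑ i ∈ s, v i ^ k / ∏ j ∈ s.erase i, (v i - v j) = if k + 1 = #s then 1 else 0 := by
  have hdeg : (X ^ k : K[X]).degree < #s := by
    rw [degree_X_pow]
    exact_mod_cast hk
  have htop : #s - 1 = k ↔ k + 1 = #s := by lia
  simpa only [eval_pow, eval_X, coeff_X_pow, htop] using (Lagrange.coeff_eq_sum hv hdeg).symm

theorem eq_sum_pow_div_prod_sub_of_isSolution {E : LinearRecurrence K} (hcard : #s = E.order)
    (hv : Set.InjOn v s) (hroot : ∀ i ∈ s, E.charPoly.IsRoot (v i)) {u : ℕ → K}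
    (hu : E.IsSolution u) (hinit : ∀ k < E.order, u k = if k + 1 = E.order then 1 else 0) (n : ℕ) :
    u n = ∑ i ∈ s, v i ^ n / ∏ j ∈ s.erase i, (v i - v j) := by
  have hbinet : E.IsSolution fun n ↦ ∑ i ∈ s, v i ^ n / ∏ j ∈ s.erase i, (v i - v j) := by
    simpa only [div_eq_inv_mul] using isSolution_sum_mul_pow hroot _
  refine congrFun ((E.eq_iff_eqOn_range_order _ _ hu hbinet).mpr fun k hk ↦ ?_) n
  have hk : k < E.order := by simpa using hk
  simp only [hinit k hk, sum_pow_div_prod_sub_of_lt_card hv (hcard ▸ hk), hcard]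

end DistinctRoots

/-- The linear recurrence `u (n + 3) = p * u (n + 2) + q * u (n + 1) + r * u n`. The coefficients
are listed from the oldest term to the newest, as `LinearRecurrence` requires. -/
def cubicRecurrence {R : Type*} [CommSemiring R] (p q r : R) : LinearRecurrence R :=
  ⟨3, ![r, q, p]⟩

namespace cubicRecurrence

theorem isSolution_iff {R : Type*} [CommSemiring R] {p q r : R} {u : ℕ → R} :
    (cubicRecurrence p q r).IsSolution u ↔
      ∀ n, u (n + 3) = p * u (n + 2) + q * u (n + 1) + r * u n := by
  have hterms (n : ℕ) : ∑ i, (cubicRecurrence p q r).coeffs i * u (n + i) =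
      p * u (n + 2) + q * u (n + 1) + r * u n :=
    (Fin.sum_univ_three _).trans <| by
      simp only [cubicRecurrence, Matrix.cons_val, Fin.coe_ofNat_eq_mod, Nat.reduceMod, add_zero]
      ring
  simp only [LinearRecurrence.IsSolution, hterms]
  rfl

theorem charPoly_eq {R : Type*} [CommRing R] (p q r : R) :
    (cubicRecurrence p q r).charPoly = X ^ 3 - (C p * X ^ 2 + C q * X + C r) := by
  have hterms : ∑ i, monomial i.val ((cubicRecurrence p q r).coeffs i) =
      C p * X ^ 2 + C q * X + C r :=
    (Fin.sum_univ_three _).trans <| by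
      simp only [cubicRecurrence, Matrix.cons_val, Fin.coe_ofNat_eq_mod, Nat.reduceMod,
        ← C_mul_X_pow_eq_monomial]
      ring
  rw [LinearRecurrence.charPoly, hterms, monomial_one_right_eq_X_pow]
  rfl

theorem charPoly_eq_prod {R : Type*} [CommRing R] {p q r a b c : R} (hsum : a + b + c = p)
    (hsum₂ : a * b + a * c + b * c = -q) (hprod : a * b * c = r) :
    (cubicRecurrence p q r).charPoly = ∏ i, (X - C (![a, b, c] i)) := by
  obtain rfl : q = -(a * b + a * c + b * c) := by rw [hsum₂, neg_neg]
  subst hsum hprod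
  simp only [charPoly_eq, Fin.prod_univ_three, Matrix.cons_val, map_add, map_mul, map_neg]
  ring

theorem eq_sum_of_isSolution {K : Type*} [Field K] {p q r a b c : K}
    (hab : a ≠ b) (hac : a ≠ c) (hbc : b ≠ c) (hsum : a + b + c = p)
    (hsum₂ : a * b + a * c + b * c = -q) (hprod : a * b * c = r) {u : ℕ → K}
    (hu : (cubicRecurrence p q r).IsSolution u) (hu₀ : u 0 = 0) (hu₁ : u 1 = 0) (hu₂ : u 2 = 1)
    (n : ℕ) :
    u n = a ^ n / ((a - b) * (a - c)) + b ^ n / ((b - a) * (b - c))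
      + c ^ n / ((c - a) * (c - b)) := by
  have hinit : ∀ k < 3, u k = if k + 1 = 3 then 1 else 0 := by
    intro k hk
    interval_cases k <;> simp [hu₀, hu₁, hu₂]
  have hinj : Function.Injective ![a, b, c] :=
    List.nodup_ofFn.mp (by simp [hab, hac, hbc])
  have hroot (i : Fin 3) : (cubicRecurrence p q r).charPoly.IsRoot (![a, b, c] i) := by
    rw [charPoly_eq_prod hsum hsum₂ hprod, isRoot_prod]
    exact ⟨i, mem_univ i, root_X_sub_C.mpr rfl⟩
  have herase₀ : (univ : Finset (Fin 3)).erase 0 = {1, 2} := rfl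
  have herase₁ : (univ : Finset (Fin 3)).erase 1 = {0, 2} := rfl
  have herase₂ : (univ : Finset (Fin 3)).erase 2 = {0, 1} := rfl
  simpa [Fin.sum_univ_three, herase₀, herase₁, herase₂] using
    eq_sum_pow_div_prod_sub_of_isSolution (card_fin 3) hinj.injOn (fun i _ ↦ hroot i) hu hinit n

end cubicRecurrence

theorem tribonacci_poly_binet_general {K : Type*} [Field K] {p q r a b c : K}
    (hab : a ≠ b) (hac : a ≠ c) (hbc : b ≠ c) (hsum : a + b + c = p)
    (hsum₂ : a * b + a * c + b * c = -q) (hprod : a * b * c = r) {u : ℕ → K}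
    (hu₀ : u 0 = 0) (hu₁ : u 1 = 1) (hu₂ : u 2 = p)
    (hu : ∀ n, u (n + 3) = p * u (n + 2) + q * u (n + 1) + r * u n) (n : ℕ) :
    u n = a ^ (n + 1) / ((a - b) * (a - c)) - b ^ (n + 1) / ((a - b) * (b - c))
      + c ^ (n + 1) / ((a - c) * (b - c)) := by
  let w : ℕ → K
    | 0 => 0
    | n + 1 => u n
  have hw : (cubicRecurrence p q r).IsSolution w := by
    refine cubicRecurrence.isSolution_iff.mpr fun
      | 0 => ?_
      | n + 1 => hu n
    simp [w, hu₀, hu₁, hu₂]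
  have hb : (b - a) * (b - c) = -((a - b) * (b - c)) := by ring
  have hc : (c - a) * (c - b) = (a - c) * (b - c) := by ring
  have hbinet := cubicRecurrence.eq_sum_of_isSolution hab hac hbc hsum hsum₂ hprod hw rfl hu₀ hu₁
    (n + 1)
  rwa [hb, hc, div_neg, ← sub_eq_add_neg] at hbinet

/-- Binet formula for the Tribonacci polynomials. -/
theorem tribonacci_poly_binet (x : ℝ) (α ω₁ ω₂ : ℂ)
    (hαω₁ : α ≠ ω₁) (hαω₂ : α ≠ ω₂) (hω₁ω₂ : ω₁ ≠ ω₂)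
    (hsum : α + ω₁ + ω₂ = (x : ℂ) ^ 2)
    (hsum2 : α * ω₁ + α * ω₂ + ω₁ * ω₂ = -(x : ℂ))
    (hprod : α * ω₁ * ω₂ = 1) (n : ℕ) :
    (Trib x n : ℂ)
      = α ^ (n + 1) / ((α - ω₁) * (α - ω₂))
        - ω₁ ^ (n + 1) / ((α - ω₁) * (ω₁ - ω₂))
        + ω₂ ^ (n + 1) / ((α - ω₂) * (ω₁ - ω₂)) := by
  refine tribonacci_poly_binet_general (u := fun n ↦ (Trib x n : ℂ)) hαω₁ hαω₂ hω₁ω₂ hsum hsum2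
    hprod ?_ ?_ ?_ (fun n ↦ ?_) n <;> simp [Trib]
end

section
/- Let x be a real number and let α, ω₁, ω₂ be complex numbers satisfying α+ω₁+ω₂ = x², αω₁+αω₂+ω₁ω₂ = -x, and αω₁ω₂ = 1 (i.e., the roots of λ³ - x²λ² - xλ - 1 = 0). Then for every natural number n, the Tribonacci-Lucas polynomial satisfies the Binet formula t_n(x) = αⁿ + ω₁ⁿ + ω₂ⁿ, where t_n(x) is regarded as a complex number. -/
/-- Tribonacci-Lucas polynomials: t₀=3, t₁=x², t₂=x⁴+2x, tₙ₊₃ = x²tₙ₊₂ + xtₙ₊₁ + tₙ. -/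
def TribL (x : ℝ) : ℕ → ℝ
  | 0 => 3
  | 1 => x ^ 2
  | 2 => x ^ 4 + 2 * x
  | n + 3 => x ^ 2 * TribL x (n + 2) + x * TribL x (n + 1) + TribL x n

/-- Tribonacci-Lucas quaternion polynomials Q_{t,n}(x). -/
noncomputable def Qt (x : ℝ) (n : ℕ) : Quaternion ℝ :=
  ⟨TribL x n, TribL x (n + 1), TribL x (n + 2), TribL x (n + 3)⟩

section PowerSums

variable {R : Type*} [CommRing R] (a b c : R)

theorem sum_three_sq :
    a ^ 2 + b ^ 2 + c ^ 2 = (a + b + c) ^ 2 - 2 * (a * b + a * c + b * c) := by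
  ring

/-- Newton's identity: each of `a`, `b`, `c` is a root of `(X - a) * (X - b) * (X - c)`, so its
powers satisfy the linear recurrence with this characteristic polynomial, and so does their sum. -/
theorem sum_three_pow_add_three (n : ℕ) :
    a ^ (n + 3) + b ^ (n + 3) + c ^ (n + 3) =
      (a + b + c) * (a ^ (n + 2) + b ^ (n + 2) + c ^ (n + 2)) -
        (a * b + a * c + b * c) * (a ^ (n + 1) + b ^ (n + 1) + c ^ (n + 1)) +
        a * b * c * (a ^ n + b ^ n + c ^ n) := by
  ring

end PowerSums

theorem tribonacci_lucas_poly_binet_general {A : Type*} [CommRing A] [Algebra ℝ A] (x : ℝ)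
    (α ω₁ ω₂ : A) (hsum : α + ω₁ + ω₂ = algebraMap ℝ A x ^ 2)
    (hsum2 : α * ω₁ + α * ω₂ + ω₁ * ω₂ = -algebraMap ℝ A x)
    (hprod : α * ω₁ * ω₂ = 1) (n : ℕ) :
    algebraMap ℝ A (TribL x n) = α ^ n + ω₁ ^ n + ω₂ ^ n := by
  fun_induction TribL x n with
  | case1 =>
    simp only [map_ofNat, pow_zero]
    norm_num
  | case2 => simp only [map_pow, pow_one, hsum]
  | case3 =>
    rw [sum_three_sq, hsum, hsum2]
    simp only [map_add, map_mul, map_pow, map_ofNat]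
    ring
  | case4 n ih₂ ih₁ ih₀ =>
    rw [sum_three_pow_add_three, hsum, hsum2, hprod, ← ih₂, ← ih₁, ← ih₀]
    simp only [map_add, map_mul, map_pow]
    ring

/-- Binet formula for the Tribonacci-Lucas polynomials. -/
theorem tribonacci_lucas_poly_binet (x : ℝ) (α ω₁ ω₂ : ℂ)
    (hsum : α + ω₁ + ω₂ = (x : ℂ) ^ 2)
    (hsum2 : α * ω₁ + α * ω₂ + ω₁ * ω₂ = -(x : ℂ))
    (hprod : α * ω₁ * ω₂ = 1) (n : ℕ) :
    (TribL x n : ℂ) = α ^ n + ω₁ ^ n + ω₂ ^ n :=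
  tribonacci_lucas_poly_binet_general x α ω₁ ω₂ hsum hsum2 hprod n
end

section
/- Let x be a real number and let α, ω₁, ω₂ be complex numbers satisfying α+ω₁+ω₂ = x², αω₁+αω₂+ω₁ω₂ = -x, and αω₁ω₂ = 1. Set α̲ = 1 + α·i + α²·j + α³·k, ω̲₁ = 1 + ω₁·i + ω₁²·j + ω₁³·k, ω̲₂ = 1 + ω₂·i + ω₂²·j + ω₂³·k in the quaternion algebra over ℂ. Then for every natural number n, the Tribonacci-Lucas quaternion polynomial (regarded in the quaternion algebra over ℂ) satisfies Q_{t,n}(x) = αⁿ·α̲ + ω₁ⁿ·ω̲₁ + ω₂ⁿ·ω̲₂. -/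
/-- Tribonacci-Lucas quaternion polynomials regarded in the quaternion algebra over ℂ. -/
noncomputable def QtC (x : ℝ) (n : ℕ) : Quaternion ℂ :=
  ⟨(TribL x n : ℂ), (TribL x (n + 1) : ℂ), (TribL x (n + 2) : ℂ), (TribL x (n + 3) : ℂ)⟩

/-- The quaternion 1 + a·i + a²·j + a³·k over ℂ. -/
def uq (a : ℂ) : Quaternion ℂ := ⟨1, a, a ^ 2, a ^ 3⟩

/-!
By Vieta, `α`, `ω₁`, `ω₂` are the roots of `X³ - x²X² - xX - 1`, so their power sums satisfy the
recurrence of `TribL x`. Newton's identities give the power sums of degree `0`, `1`, `2` as `3`,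
`x²`, `x⁴ + 2x`, the initial values of `TribL x`. The quaternion identity is this scalar one read
in each coordinate.
-/

section PowerSums

variable {R : Type*} [CommRing R]

theorem sq_add_sq_add_sq (a b c : R) :
    a ^ 2 + b ^ 2 + c ^ 2 = (a + b + c) ^ 2 - 2 * (a * b + a * c + b * c) := by
  ring

theorem pow_add_pow_add_pow_recurrence (a b c : R) (n : ℕ) :
    a ^ (n + 3) + b ^ (n + 3) + c ^ (n + 3) =
      (a + b + c) * (a ^ (n + 2) + b ^ (n + 2) + c ^ (n + 2))
        - (a * b + a * c + b * c) * (a ^ (n + 1) + b ^ (n + 1) + c ^ (n + 1))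
        + a * b * c * (a ^ n + b ^ n + c ^ n) := by
  ring

theorem eq_pow_add_pow_add_pow_of_recurrence {a b c : R} {u : ℕ → R}
    (h_zero : u 0 = 3) (h_one : u 1 = a + b + c)
    (h_two : u 2 = (a + b + c) ^ 2 - 2 * (a * b + a * c + b * c))
    (h_rec : ∀ n, u (n + 3) =
      (a + b + c) * u (n + 2) - (a * b + a * c + b * c) * u (n + 1) + a * b * c * u n) :
    ∀ n, u n = a ^ n + b ^ n + c ^ n
  | 0 => by rw [h_zero]; norm_num
  | 1 => by simpa only [pow_one] using h_one
  | 2 => h_two.trans (sq_add_sq_add_sq a b c).symm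
  | n + 3 => by
    rw [h_rec, pow_add_pow_add_pow_recurrence,
      eq_pow_add_pow_add_pow_of_recurrence h_zero h_one h_two h_rec (n + 2),
      eq_pow_add_pow_add_pow_of_recurrence h_zero h_one h_two h_rec (n + 1),
      eq_pow_add_pow_add_pow_of_recurrence h_zero h_one h_two h_rec n]

end PowerSums

theorem algebraMap_TribL_eq_pow_add_pow_add_pow {A : Type*} [CommRing A] [Algebra ℝ A]
    {x : ℝ} {a b c : A} (h_sum : a + b + c = algebraMap ℝ A x ^ 2)
    (h_sum_mul : a * b + a * c + b * c = -algebraMap ℝ A x) (h_prod : a * b * c = 1) (n : ℕ) :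
    algebraMap ℝ A (TribL x n) = a ^ n + b ^ n + c ^ n := by
  refine eq_pow_add_pow_add_pow_of_recurrence (u := fun m ↦ algebraMap ℝ A (TribL x m))
    ?_ ?_ ?_ (fun m ↦ ?_) n
  · exact map_ofNat _ 3
  · rw [h_sum, TribL, map_pow]
  · rw [h_sum, h_sum_mul, TribL, map_add, map_mul, map_pow, map_ofNat]
    ring
  · rw [h_sum, h_sum_mul, h_prod, TribL, map_add, map_add, map_mul, map_mul, map_pow]
    ring

theorem pow_smul_uq (a : ℂ) (n : ℕ) :
    a ^ n • uq a = ⟨a ^ n, a ^ (n + 1), a ^ (n + 2), a ^ (n + 3)⟩ := by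
  ext
  exacts [mul_one _, (pow_succ a n).symm, (pow_add a n 2).symm, (pow_add a n 3).symm]

/-- Binet formula for the Tribonacci-Lucas quaternion polynomials. -/
theorem tribonacci_lucas_quaternion_binet (x : ℝ) (α ω₁ ω₂ : ℂ)
    (hsum : α + ω₁ + ω₂ = (x : ℂ) ^ 2)
    (hsum2 : α * ω₁ + α * ω₂ + ω₁ * ω₂ = -(x : ℂ))
    (hprod : α * ω₁ * ω₂ = 1) (n : ℕ) :
    QtC x n = (α ^ n) • uq α + (ω₁ ^ n) • uq ω₁ + (ω₂ ^ n) • uq ω₂ := by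
  have binet (m : ℕ) : (TribL x m : ℂ) = α ^ m + ω₁ ^ m + ω₂ ^ m :=
    algebraMap_TribL_eq_pow_add_pow_add_pow hsum hsum2 hprod m
  simp only [QtC, binet, pow_smul_uq]
  rfl
end

section
/- For every real number x, in the ring of formal power series in one variable y over the real quaternions ℍ, the generating function of the Tribonacci-Lucas quaternion polynomials satisfies (1 - x²y - xy² - y³) · ∑_{n≥0} Q_{t,n}(x) yⁿ = (3 - 2x²y - xy²) + (x² + 2xy + 3y²)·i + (x⁴ + 2x + x³y + 3y + x²y²)·j + (x⁶ + 3x³ + 3 + x⁵y + 3x²y + x⁴y² + 2xy²)·k. -/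
/-- The quaternionic units i, j, k. -/
def qi : Quaternion ℝ := ⟨0, 1, 0, 0⟩
def qj : Quaternion ℝ := ⟨0, 0, 1, 0⟩
def qk : Quaternion ℝ := ⟨0, 0, 0, 1⟩

/-!
The four components of the quaternion sequence are the shifts by 0, 1, 2, 3 of the single real
sequence `TribL x`, so its generating function is the combination, with coefficients `1, i, j, k`,
of four real generating functions. Each shift satisfies the same recurrence, and multiplication by
the denominator `1 - x²y - xy² - y³` leaves only a polynomial of degree at most two. As the
denominator has real coefficients, it acts on the four components separately.
-/

section

open PowerSeries Quaternion

-- Every index `n - (i + 1)` below has `i < n`, so the subtraction never truncates.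
theorem one_sub_sum_mul_mk_of_recurrence {R : Type*} [Ring R] {d : ℕ} {a u : ℕ → R}
    (hu : ∀ n ≥ d, u n = ∑ i ∈ Finset.range d, a i * u (n - (i + 1))) :
    (1 - ∑ i ∈ Finset.range d, C (a i) * X ^ (i + 1)) * mk u
      = ∑ n ∈ Finset.range d,
          C (u n - ∑ i ∈ Finset.range n, a i * u (n - (i + 1))) * X ^ n := by
  ext n
  have coeff_lhs : coeff n ((1 - ∑ i ∈ Finset.range d, C (a i) * X ^ (i + 1)) * mk u)
      = u n - ∑ i ∈ Finset.range d with i < n, a i * u (n - (i + 1)) := by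
    simp [sub_mul, Finset.sum_mul, mul_assoc, coeff_X_pow_mul', Finset.sum_filter]
  have coeff_rhs : coeff n (∑ m ∈ Finset.range d,
        C (u m - ∑ i ∈ Finset.range m, a i * u (m - (i + 1))) * X ^ m)
      = if n < d then u n - ∑ i ∈ Finset.range n, a i * u (n - (i + 1)) else 0 := by
    simp [-map_sub, coeff_X_pow]
  rw [coeff_lhs, coeff_rhs]
  split_ifs with hn
  · have filter_eq : (Finset.range d).filter (· < n) = Finset.range n := by
      grind
    rw [filter_eq]
  · have filter_eq : (Finset.range d).filter (· < n) = Finset.range d := by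
      grind
    rw [filter_eq, hu n (not_lt.mp hn), sub_self]

theorem one_sub_mul_mk_of_recurrence_three {R : Type*} [Ring R] {a b c : R} {u : ℕ → R}
    (hu : ∀ n, u (n + 3) = a * u (n + 2) + b * u (n + 1) + c * u n) :
    (1 - C a * X - C b * X ^ 2 - C c * X ^ 3) * mk u
      = C (u 0) + C (u 1 - a * u 0) * X + C (u 2 - a * u 1 - b * u 0) * X ^ 2 := by
  let coeffs : ℕ → R
    | 0 => a
    | 1 => b
    | _ => c
  have hcoeffs (n : ℕ) (hn : n ≥ 3) :
      u n = ∑ i ∈ Finset.range 3, coeffs i * u (n - (i + 1)) := by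
    obtain ⟨m, rfl⟩ := Nat.exists_eq_add_of_le' hn
    simp [Finset.sum_range_succ, coeffs, hu]
  simpa [Finset.sum_range_succ, coeffs, sub_sub, add_assoc] using
    one_sub_sum_mul_mk_of_recurrence hcoeffs

theorem one_sub_mul_mk_TribL_add (x : ℝ) (m : ℕ) :
    (1 - C (x ^ 2) * X - C x * X ^ 2 - X ^ 3) * mk (fun n => TribL x (n + m))
      = C (TribL x m) + C (TribL x (m + 1) - x ^ 2 * TribL x m) * X
        + C (TribL x (m + 2) - x ^ 2 * TribL x (m + 1) - x * TribL x m) * X ^ 2 := by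
  have hrec (n : ℕ) : TribL x (n + 3 + m)
      = x ^ 2 * TribL x (n + 2 + m) + x * TribL x (n + 1 + m) + 1 * TribL x (n + m) := by
    simp only [Nat.add_right_comm n _ m, TribL, one_mul]
  have h := one_sub_mul_mk_of_recurrence_three (u := fun n => TribL x (n + m)) hrec
  rwa [map_one, one_mul, zero_add, add_comm 1, add_comm 2] at h

theorem one_sub_mul_mk_TribL (x : ℝ) :
    (1 - C (x ^ 2) * X - C x * X ^ 2 - X ^ 3) * mk (TribL x)
      = 3 - C (2 * x ^ 2) * X - C x * X ^ 2 := by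
  refine (one_sub_mul_mk_TribL_add x 0).trans ?_
  simp only [TribL, map_add, map_sub, map_mul, map_pow, map_ofNat]
  ring

theorem one_sub_mul_mk_TribL_add_one (x : ℝ) :
    (1 - C (x ^ 2) * X - C x * X ^ 2 - X ^ 3) * mk (fun n => TribL x (n + 1))
      = C (x ^ 2) + C (2 * x) * X + 3 * X ^ 2 := by
  rw [one_sub_mul_mk_TribL_add]
  simp only [TribL, map_add, map_sub, map_mul, map_pow, map_ofNat]
  ring

theorem one_sub_mul_mk_TribL_add_two (x : ℝ) :
    (1 - C (x ^ 2) * X - C x * X ^ 2 - X ^ 3) * mk (fun n => TribL x (n + 2))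
      = C (x ^ 4 + 2 * x) + (C (x ^ 3) + 3) * X + C (x ^ 2) * X ^ 2 := by
  rw [one_sub_mul_mk_TribL_add]
  simp only [TribL, map_add, map_sub, map_mul, map_pow, map_ofNat]
  ring

theorem one_sub_mul_mk_TribL_add_three (x : ℝ) :
    (1 - C (x ^ 2) * X - C x * X ^ 2 - X ^ 3) * mk (fun n => TribL x (n + 3))
      = C (x ^ 6 + 3 * x ^ 3 + 3) + C (x ^ 5 + 3 * x ^ 2) * X + C (x ^ 4 + 2 * x) * X ^ 2 := by
  rw [one_sub_mul_mk_TribL_add]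
  simp only [TribL, map_add, map_sub, map_mul, map_pow, map_ofNat]
  ring

attribute [simps] qi qj qk

theorem quaternion_eq_add_mul_units (q : ℍ[ℝ]) :
    q = q.re + q.imI * qi + q.imJ * qj + q.imK * qk := by
  ext <;> simp

theorem mk_eq_map_add_map_mul_units (q : ℕ → ℍ[ℝ]) :
    mk q = map (algebraMap ℝ ℍ[ℝ]) (mk fun n => (q n).re)
      + map (algebraMap ℝ ℍ[ℝ]) (mk fun n => (q n).imI) * C qi
      + map (algebraMap ℝ ℍ[ℝ]) (mk fun n => (q n).imJ) * C qj
      + map (algebraMap ℝ ℍ[ℝ]) (mk fun n => (q n).imK) * C qk := by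
  ext1 n
  simpa [Quaternion.algebraMap_def] using quaternion_eq_add_mul_units (q n)

theorem mk_Qt_eq_map_add_map_mul_units (x : ℝ) :
    mk (Qt x) = map (algebraMap ℝ ℍ[ℝ]) (mk (TribL x))
      + map (algebraMap ℝ ℍ[ℝ]) (mk fun n => TribL x (n + 1)) * C qi
      + map (algebraMap ℝ ℍ[ℝ]) (mk fun n => TribL x (n + 2)) * C qj
      + map (algebraMap ℝ ℍ[ℝ]) (mk fun n => TribL x (n + 3)) * C qk :=
  mk_eq_map_add_map_mul_units (Qt x)

end

open PowerSeries in
/-- generating function of the Tribonacci-Lucas quaternion polynomials. -/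
theorem tribonacci_lucas_quaternion_generating_function (x : ℝ) :
    (1 - C (R := Quaternion ℝ) ((x ^ 2 : ℝ) : Quaternion ℝ) * X
        - C (R := Quaternion ℝ) ((x : ℝ) : Quaternion ℝ) * X ^ 2 - X ^ 3)
        * PowerSeries.mk (fun n => Qt x n)
      = (3 - C (R := Quaternion ℝ) ((2 * x ^ 2 : ℝ) : Quaternion ℝ) * X
            - C (R := Quaternion ℝ) ((x : ℝ) : Quaternion ℝ) * X ^ 2)
        + (C (R := Quaternion ℝ) ((x ^ 2 : ℝ) : Quaternion ℝ)
            + C (R := Quaternion ℝ) ((2 * x : ℝ) : Quaternion ℝ) * X + 3 * X ^ 2)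
            * C (R := Quaternion ℝ) qi
        + (C (R := Quaternion ℝ) ((x ^ 4 + 2 * x : ℝ) : Quaternion ℝ)
            + (C (R := Quaternion ℝ) ((x ^ 3 : ℝ) : Quaternion ℝ) + 3) * X
            + C (R := Quaternion ℝ) ((x ^ 2 : ℝ) : Quaternion ℝ) * X ^ 2)
            * C (R := Quaternion ℝ) qj
        + (C (R := Quaternion ℝ) ((x ^ 6 + 3 * x ^ 3 + 3 : ℝ) : Quaternion ℝ)
            + C (R := Quaternion ℝ) ((x ^ 5 + 3 * x ^ 2 : ℝ) : Quaternion ℝ) * X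
            + C (R := Quaternion ℝ) ((x ^ 4 + 2 * x : ℝ) : Quaternion ℝ) * X ^ 2)
            * C (R := Quaternion ℝ) qk := by
  have denominator_eq_map : 1 - C (R := Quaternion ℝ) ((x ^ 2 : ℝ) : Quaternion ℝ) * X
        - C (R := Quaternion ℝ) ((x : ℝ) : Quaternion ℝ) * X ^ 2 - X ^ 3
      = map (algebraMap ℝ (Quaternion ℝ)) (1 - C (x ^ 2) * X - C x * X ^ 2 - X ^ 3) := by
    simp [Quaternion.algebraMap_def]
  rw [denominator_eq_map, mk_Qt_eq_map_add_map_mul_units]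
  simp only [mul_add, ← mul_assoc, ← map_mul, one_sub_mul_mk_TribL,
    one_sub_mul_mk_TribL_add_one, one_sub_mul_mk_TribL_add_two, one_sub_mul_mk_TribL_add_three]
  simp [← Quaternion.algebraMap_def, map_ofNat]
end

section
/- For every real number x and every natural number m ≥ 2, in the ring of formal power series in one variable y over the real quaternions ℍ, the generating function of the shifted Tribonacci quaternion polynomials satisfies (1 - x²y - xy² - y³) · ∑_{n≥0} Q_{T,n+m}(x) yⁿ = Q_{T,m}(x) + (x·Q_{T,m-1}(x) + Q_{T,m-2}(x))·y + Q_{T,m-1}(x)·y². -/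
/-!
If `u` satisfies a linear recurrence of order `d`, multiplying its generating function by the
reversed characteristic polynomial kills every coefficient from degree `d` on, leaving a numerator
determined by the first `d` terms. For the shifted Tribonacci quaternions, running the recurrence
backwards from these terms rewrites the numerator in terms of `Q_{T,m}`, `Q_{T,m-1}`, `Q_{T,m-2}`.

Mathlib's `LinearRecurrence` requires commutative coefficients, so it does not cover sequences in
the quaternions.
-/

section LinearRecurrence

open PowerSeries

variable {R : Type*} [Ring R] {d : ℕ}

theorem coeff_one_sub_sum_C_mul_X_pow_mul_mk (a : Fin d → R) (u : ℕ → R) (n : ℕ) :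
    coeff n ((1 - ∑ i : Fin d, C (a i) * X ^ (d - i : ℕ)) * mk u) =
      u n - ∑ i : Fin d, if d - i ≤ n then a i * u (n - (d - i)) else 0 := by
  simp [sub_mul, Finset.sum_mul, mul_assoc, coeff_X_pow_mul']

theorem one_sub_sum_C_mul_X_pow_mul_mk_of_linearRecurrence {a : Fin d → R} {u : ℕ → R}
    (hu : ∀ n, u (n + d) = ∑ i : Fin d, a i * u (n + i)) :
    (1 - ∑ i : Fin d, C (a i) * X ^ (d - i : ℕ)) * mk u =
      ∑ n ∈ Finset.range d,
        C (u n - ∑ i : Fin d, if d - i ≤ n then a i * u (n - (d - i)) else 0) * X ^ n := by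
  ext n
  rw [coeff_one_sub_sum_C_mul_X_pow_mul_mk]
  simp only [map_sum, coeff_C_mul_X_pow, Finset.sum_ite_eq, Finset.mem_range]
  split_ifs with hn
  · rfl
  · obtain ⟨k, rfl⟩ := Nat.exists_eq_add_of_le' (not_lt.mp hn)
    have index_eq (i : Fin d) : k + d - (d - i) = k + i := by omega
    have index_le (i : Fin d) : d - i ≤ k + d := by omega
    simp only [index_eq, index_le, if_true, hu, sub_self]

theorem mul_mk_of_linearRecurrence_order_three {a b c : R} {u : ℕ → R}
    (hu : ∀ n, u (n + 3) = a * u (n + 2) + b * u (n + 1) + c * u n) :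
    (1 - C a * X - C b * X ^ 2 - C c * X ^ 3) * mk u =
      C (u 0) + C (u 1 - a * u 0) * X + C (u 2 - a * u 1 - b * u 0) * X ^ 2 := by
  have recurrence (n : ℕ) : u (n + 3) = ∑ i : Fin 3, ![c, b, a] i * u (n + i) := by
    simpa [Fin.sum_univ_three, add_comm, add_left_comm, add_assoc] using hu n
  simpa [Fin.sum_univ_three, Finset.sum_range_succ, sub_add_eq_sub_sub_swap] using
    one_sub_sum_C_mul_X_pow_mul_mk_of_linearRecurrence recurrence

end LinearRecurrence

theorem Trib_add_three (x : ℝ) (n : ℕ) :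
    Trib x (n + 3) = x ^ 2 * Trib x (n + 2) + x * Trib x (n + 1) + Trib x n := by
  rw [Trib]

theorem QT_add_three (x : ℝ) (n : ℕ) :
    QT x (n + 3) = x ^ 2 • QT x (n + 2) + x • QT x (n + 1) + QT x n := by
  ext <;> exact Trib_add_three x _

open PowerSeries in
/-- generating function of the shifted Tribonacci quaternion polynomials. -/
theorem tribonacci_quaternion_shifted_generating_function (x : ℝ) (m : ℕ) (hm : 2 ≤ m) :
    (1 - C (R := Quaternion ℝ) ((x ^ 2 : ℝ) : Quaternion ℝ) * X
        - C (R := Quaternion ℝ) ((x : ℝ) : Quaternion ℝ) * X ^ 2 - X ^ 3)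
        * PowerSeries.mk (fun n => QT x (n + m))
      = C (R := Quaternion ℝ) (QT x m)
        + C (R := Quaternion ℝ) (x • QT x (m - 1) + QT x (m - 2)) * X
        + C (R := Quaternion ℝ) (QT x (m - 1)) * X ^ 2 := by
  obtain ⟨k, rfl⟩ := Nat.exists_eq_add_of_le' hm
  have recurrence (n : ℕ) : QT x (n + 3 + (k + 2)) =
      ((x ^ 2 : ℝ) : Quaternion ℝ) * QT x (n + 2 + (k + 2))
        + (x : Quaternion ℝ) * QT x (n + 1 + (k + 2)) + 1 * QT x (n + (k + 2)) := by
    simp only [Nat.add_right_comm n _ (k + 2), Quaternion.coe_mul_eq_smul, one_mul, QT_add_three]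
  have coeff_one : QT x (1 + (k + 2)) - x ^ 2 • QT x (k + 2) = x • QT x (k + 1) + QT x k := by
    rw [add_comm 1, QT_add_three]
    abel
  have coeff_two :
      QT x (2 + (k + 2)) - x ^ 2 • QT x (1 + (k + 2)) - x • QT x (k + 2) = QT x (k + 1) := by
    rw [add_comm 2, add_comm 1, QT_add_three x (k + 1)]
    abel
  have generating_function :=
    mul_mk_of_linearRecurrence_order_three (u := fun n ↦ QT x (n + (k + 2))) recurrence
  simpa only [Quaternion.coe_mul_eq_smul, coeff_one, coeff_two, map_one, one_mul, zero_add,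
    Nat.add_one_sub_one, Nat.add_sub_cancel] using generating_function
end

section
/- For every real number x and every natural number m ≥ 2, in the ring of formal power series in one variable y over the real quaternions ℍ, the generating function of the shifted Tribonacci-Lucas quaternion polynomials satisfies (1 - x²y - xy² - y³) · ∑_{n≥0} Q_{t,n+m}(x) yⁿ = Q_{t,m}(x) + (x·Q_{t,m-1}(x) + Q_{t,m-2}(x))·y + Q_{t,m-1}(x)·y². -/
/-!
For a sequence `u`, put `G m = ∑ u (n + m) Xⁿ`, so that `G m = G (m + 1) * X + u m`. A recurrence
`u (n + 3) = a u (n + 2) + b u (n + 1) + c u n` gives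
`G (k + 3) = a G (k + 2) + b G (k + 1) + c G k`. Multiplying by `X` and expressing `G (k + 3)`,
`G (k + 1)` and `G k` through `G (k + 2)` leaves a linear equation for `G (k + 2)`. Since `X` is
central, this computation is valid over a noncommutative ring such as the quaternions.
-/

section ThirdOrderRecurrence

open PowerSeries

theorem mk_add_eq_mk_add_succ_mul_X_add_C {R : Type*} [Semiring R] (u : ℕ → R) (m : ℕ) :
    mk (fun n => u (n + m)) = mk (fun n => u (n + (m + 1))) * X + C (u m) := by
  simpa [Nat.add_right_comm, Nat.add_assoc] using eq_shift_mul_X_add_const (mk fun n => u (n + m))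

theorem mk_add_three_of_recurrence {R : Type*} [Semiring R] {a b c : R} {u : ℕ → R}
    (hu : ∀ n, u (n + 3) = a * u (n + 2) + b * u (n + 1) + c * u n) (k : ℕ) :
    mk (fun n => u (n + (k + 3))) = C a * mk (fun n => u (n + (k + 2)))
      + C b * mk (fun n => u (n + (k + 1))) + C c * mk (fun n => u (n + k)) := by
  ext n
  simpa [add_assoc] using hu (n + k)

theorem mul_mk_add_two_of_recurrence {R : Type*} [Ring R] {a b c : R} {u : ℕ → R}
    (hu : ∀ n, u (n + 3) = a * u (n + 2) + b * u (n + 1) + c * u n) (k : ℕ) :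
    (1 - C a * X - C b * X ^ 2 - C c * X ^ 3) * mk (fun n => u (n + (k + 2)))
      = C (u (k + 2)) + C (b * u (k + 1) + c * u k) * X + C (c * u (k + 1)) * X ^ 2 := by
  let G : ℕ → R⟦X⟧ := fun m => mk fun n => u (n + m)
  have shift (m : ℕ) : G m = G (m + 1) * X + C (u m) := mk_add_eq_mk_add_succ_mul_X_add_C u m
  have recurrence : G (k + 3) = C a * G (k + 2) + C b * G (k + 1) + C c * G k :=
    mk_add_three_of_recurrence hu k
  have linear_equation : G (k + 2) = (C a * G (k + 2) + C b * (G (k + 2) * X + C (u (k + 1)))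
      + C c * ((G (k + 2) * X + C (u (k + 1))) * X + C (u k))) * X + C (u (k + 2)) := by
    rw [← shift (k + 1), ← shift k, ← recurrence, ← shift (k + 2)]
  change (1 - C a * X - C b * X ^ 2 - C c * X ^ 3) * G (k + 2) = _
  simp only [sub_mul, one_mul, mul_assoc, X_pow_mul, X_mul (φ := G (k + 2)), map_add, map_mul]
  linear_combination (norm := noncomm_ring) linear_equation

end ThirdOrderRecurrence

theorem TribL_add_three (x : ℝ) (n : ℕ) :
    TribL x (n + 3) = x ^ 2 * TribL x (n + 2) + x * TribL x (n + 1) + TribL x n := by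
  rw [TribL]

theorem Qt_add_three (x : ℝ) (n : ℕ) :
    Qt x (n + 3) = x ^ 2 • Qt x (n + 2) + x • Qt x (n + 1) + Qt x n := by
  ext <;> exact TribL_add_three x _

open PowerSeries in
/-- generating function of the shifted Tribonacci-Lucas quaternion polynomials. -/
theorem tribonacci_lucas_quaternion_shifted_generating_function (x : ℝ) (m : ℕ) (hm : 2 ≤ m) :
    (1 - C (R := Quaternion ℝ) ((x ^ 2 : ℝ) : Quaternion ℝ) * X
        - C (R := Quaternion ℝ) ((x : ℝ) : Quaternion ℝ) * X ^ 2 - X ^ 3)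
        * PowerSeries.mk (fun n => Qt x (n + m))
      = C (R := Quaternion ℝ) (Qt x m)
        + C (R := Quaternion ℝ) (x • Qt x (m - 1) + Qt x (m - 2)) * X
        + C (R := Quaternion ℝ) (Qt x (m - 1)) * X ^ 2 := by
  obtain ⟨k, rfl⟩ := Nat.exists_eq_add_of_le' hm
  have recurrence (n : ℕ) : Qt x (n + 3) =
      ((x ^ 2 : ℝ) : Quaternion ℝ) * Qt x (n + 2) + (x : Quaternion ℝ) * Qt x (n + 1)
        + 1 * Qt x n := by
    rw [Quaternion.coe_mul_eq_smul, Quaternion.coe_mul_eq_smul, one_mul, Qt_add_three]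
  simpa only [map_one, one_mul, Quaternion.coe_mul_eq_smul, Nat.add_sub_cancel,
    Nat.add_succ_sub_one] using mul_mk_add_two_of_recurrence recurrence k
end

section
/- Let x be a real number and let α, ω₁, ω₂ be complex numbers satisfying α+ω₁+ω₂ = x², αω₁+αω₂+ω₁ω₂ = -x, and αω₁ω₂ = 1, and set α̲ = 1 + α·i + α²·j + α³·k, ω̲₁ = 1 + ω₁·i + ω₁²·j + ω₁³·k, ω̲₂ = 1 + ω₂·i + ω₂²·j + ω₂³·k in the quaternion algebra over ℂ. Then for every complex number y, the series ∑_{n≥0} (yⁿ/n!)·Q_{t,n}(x) converges (has sum) to e^{αy}·α̲ + e^{ω₁y}·ω̲₁ + e^{ω₂y}·ω̲₂. -/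
/-- The natural (componentwise) topology on the quaternion algebra over ℂ. -/
noncomputable instance : TopologicalSpace (Quaternion ℂ) :=
  TopologicalSpace.induced (fun q => (q.re, q.imI, q.imJ, q.imK)) inferInstance

/-!
The power sums `α ^ n + ω₁ ^ n + ω₂ ^ n` satisfy Newton's recurrence, whose coefficients and initial
values are those of the Tribonacci-Lucas polynomials. As shifting the index multiplies `α ^ n` by a
power of `α`, this Binet formula lifts to quaternions, with `uq α`, `uq ω₁`, `uq ω₂` as coefficients
of `α ^ n`, `ω₁ ^ n`, `ω₂ ^ n`; the generating function then splits into three exponential series.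
-/

theorem sum_three_pow_recurrence {R : Type*} [CommRing R] (a b c : R) (n : ℕ) :
    a ^ (n + 3) + b ^ (n + 3) + c ^ (n + 3) =
      (a + b + c) * (a ^ (n + 2) + b ^ (n + 2) + c ^ (n + 2)) -
        (a * b + a * c + b * c) * (a ^ (n + 1) + b ^ (n + 1) + c ^ (n + 1)) +
        a * b * c * (a ^ n + b ^ n + c ^ n) := by
  ring

theorem algebraMap_TribL_eq_sum_pow {A : Type*} [CommRing A] [Algebra ℝ A] {x : ℝ} {a b c : A}
    (hsum : a + b + c = algebraMap ℝ A x ^ 2)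
    (hsum2 : a * b + a * c + b * c = -algebraMap ℝ A x) (hprod : a * b * c = 1) (n : ℕ) :
    algebraMap ℝ A (TribL x n) = a ^ n + b ^ n + c ^ n := by
  induction n using TribL.induct with
  | case1 =>
    simp only [TribL, map_ofNat, pow_zero]
    norm_num
  | case2 => simp [TribL, hsum]
  | case3 =>
    have hsq : a ^ 2 + b ^ 2 + c ^ 2 = (a + b + c) ^ 2 - 2 * (a * b + a * c + b * c) := by ring
    rw [hsq, hsum, hsum2]
    simp only [TribL, map_add, map_mul, map_pow, map_ofNat]
    ring
  | case4 n ih₂ ih₁ ih₀ =>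
    rw [sum_three_pow_recurrence, hsum, hsum2, hprod, ← ih₀, ← ih₁, ← ih₂]
    simp only [TribL, map_add, map_mul, map_pow]
    ring

theorem QtC_eq_sum_pow_smul_uq {x : ℝ} {α ω₁ ω₂ : ℂ}
    (hsum : α + ω₁ + ω₂ = (x : ℂ) ^ 2)
    (hsum2 : α * ω₁ + α * ω₂ + ω₁ * ω₂ = -(x : ℂ))
    (hprod : α * ω₁ * ω₂ = 1) (n : ℕ) :
    QtC x n = α ^ n • uq α + ω₁ ^ n • uq ω₁ + ω₂ ^ n • uq ω₂ := by
  have binet (m : ℕ) : (TribL x m : ℂ) = α ^ m + ω₁ ^ m + ω₂ ^ m :=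
    algebraMap_TribL_eq_sum_pow hsum hsum2 hprod m
  ext <;>
    simp only [Quaternion.re_add, Quaternion.imI_add, Quaternion.imJ_add, Quaternion.imK_add,
      Quaternion.re_smul, Quaternion.imI_smul, Quaternion.imJ_smul, Quaternion.imK_smul] <;>
    simp [QtC, uq, binet, pow_add]

instance : ContinuousAdd (Quaternion ℂ) :=
  continuousAdd_induced (QuaternionAlgebra.addEquivProd (-1 : ℂ) 0 (-1))

instance : ContinuousSMul ℂ (Quaternion ℂ) :=
  Topology.IsInducing.continuousSMul (Y := Quaternion ℂ)
    (g := QuaternionAlgebra.equivProd (-1 : ℂ) 0 (-1)) ⟨rfl⟩ continuous_id rfl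

theorem hasSum_pow_div_factorial_smul_pow_smul {𝕜 E : Type*} [NormedField 𝕜] [NormedAlgebra ℚ 𝕜]
    [CompleteSpace 𝕜] [AddCommMonoid E] [Module 𝕜 E] [TopologicalSpace E] [ContinuousSMul 𝕜 E]
    (a y : 𝕜) (v : E) :
    HasSum (fun n : ℕ => (y ^ n / n.factorial) • a ^ n • v) (NormedSpace.exp (a * y) • v) := by
  refine ((NormedSpace.expSeries_div_hasSum_exp (a * y)).smul_const v).congr_fun fun n => ?_
  rw [smul_smul, mul_pow, mul_comm (a ^ n), div_mul_eq_mul_div]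

/-- exponential generating function of the Tribonacci-Lucas quaternion
polynomials. -/
theorem tribonacci_lucas_quaternion_exp_generating_function (x : ℝ) (α ω₁ ω₂ : ℂ)
    (hsum : α + ω₁ + ω₂ = (x : ℂ) ^ 2)
    (hsum2 : α * ω₁ + α * ω₂ + ω₁ * ω₂ = -(x : ℂ))
    (hprod : α * ω₁ * ω₂ = 1) (y : ℂ) :
    HasSum (fun n : ℕ => (y ^ n / n.factorial) • QtC x n)
      (Complex.exp (α * y) • uq α + Complex.exp (ω₁ * y) • uq ω₁
        + Complex.exp (ω₂ * y) • uq ω₂) := by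
  have hexp (a : ℂ) :
      HasSum (fun n : ℕ => (y ^ n / n.factorial) • a ^ n • uq a) (Complex.exp (a * y) • uq a) := by
    simpa only [Complex.exp_eq_exp_ℂ] using hasSum_pow_div_factorial_smul_pow_smul a y (uq a)
  simpa only [QtC_eq_sum_pow_smul_uq hsum hsum2 hprod, smul_add] using
    ((hexp α).add (hexp ω₁)).add (hexp ω₂)
end

section
/- For every real number x and every natural number n, the Tribonacci quaternion polynomials satisfy the binomial identity ∑_{r=0}^{n} ∑_{s=0}^{r} C(n,r)·C(r,s)·x^{r+s}·Q_{T,r+s}(x) = Q_{T,3n}(x), where C(·,·) denotes the binomial coefficient. -/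
/-!
Let `E` be the shift operator on sequences. The recurrence says `E³ Q = (1 + xE + x²E²) Q`, and
since the two operators commute, `E³ⁿ Q = (1 + xE + x²E²)ⁿ Q`. Writing `1 + xE + x²E²` as
`1 + xE (1 + xE)` and applying the binomial theorem twice gives the double sum.
-/

theorem one_add_self_add_sq_pow {A : Type*} [Semiring A] (y : A) (n : ℕ) :
    (1 + y + y ^ 2) ^ n =
      ∑ r ∈ Finset.range (n + 1), ∑ s ∈ Finset.range (r + 1),
        (n.choose r * r.choose s) • y ^ (r + s) := by
  have factor : 1 + y + y ^ 2 = y * (y + 1) + 1 := by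
    rw [mul_add_one, ← sq, add_assoc, add_comm, add_comm y]
  have expand_inner (r : ℕ) :
      (y * (y + 1)) ^ r = ∑ s ∈ Finset.range (r + 1), r.choose s • y ^ (r + s) := by
    rw [((Commute.refl y).add_right (Commute.one_right y)).mul_pow,
      (Commute.one_right y).add_pow, Finset.mul_sum]
    simp only [one_pow, mul_one, nsmul_eq_mul', pow_add, mul_assoc]
  rw [factor, (Commute.one_right _).add_pow]
  simp only [one_pow, mul_one, ← nsmul_eq_mul', expand_inner, Finset.smul_sum, mul_smul]

theorem pow_smul_eq_pow_smul_of_commute {A X : Type*} [Monoid A] [MulAction A X] {a b : A}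
    (hab : Commute a b) {v : X} (hv : a • v = b • v) (n : ℕ) : a ^ n • v = b ^ n • v := by
  have hsmul : Function.Commute (a • · : X → X) (b • ·) := fun w => by
    simp only [smul_smul, hab.eq]
  simpa only [smul_iterate] using hsmul.iterate_eq_of_map_eq n hv

section WeightedShift

variable {R M : Type*} [Semiring R] [AddCommMonoid M] [Module R M]

/-- The weighted shift operator `(weightedShift a u) k = a • u (k + 1)` on sequences, through which
a linear recurrence for `u` becomes an equation between operators applied to `u`. It is taken
`ℕ`-linear because scaling by `a` is not `R`-linear over a noncommutative `R`. -/
def weightedShift (a : R) : Module.End ℕ (ℕ → M) :=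
  a • LinearMap.funLeft ℕ M Nat.succ

theorem weightedShift_apply (a : R) (u : ℕ → M) (k : ℕ) :
    weightedShift a u k = a • u (k + 1) :=
  rfl

theorem weightedShift_pow_apply (a : R) (m : ℕ) (u : ℕ → M) (k : ℕ) :
    (weightedShift a ^ m) u k = a ^ m • u (k + m) := by
  induction m generalizing k with
  | zero => rw [pow_zero, pow_zero, one_smul, Module.End.one_apply, add_zero]
  | succ m ih =>
    rw [pow_succ', Module.End.mul_apply, weightedShift_apply, ih, smul_smul, ← pow_succ',
      add_right_comm, add_assoc]

theorem commute_weightedShift {a b : R} (hab : Commute a b) :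
    Commute (weightedShift a : Module.End ℕ (ℕ → M)) (weightedShift b) := by
  refine LinearMap.ext fun u => funext fun k => ?_
  simp only [Module.End.mul_apply, weightedShift_apply, smul_smul, hab.eq]

end WeightedShift

theorem tribonacci_quaternion_binomial_sum_general {R M : Type*} [Semiring R]
    [AddCommMonoid M] [Module R M] {a : R} {u : ℕ → M}
    (hu : ∀ k, u (k + 3) = a ^ 2 • u (k + 2) + a • u (k + 1) + u k) (n : ℕ) :
    ∑ r ∈ Finset.range (n + 1), ∑ s ∈ Finset.range (r + 1),
      ((n.choose r : R) * (r.choose s : R) * a ^ (r + s)) • u (r + s) = u (3 * n) := by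
  let E : Module.End ℕ (ℕ → M) := weightedShift (1 : R)
  let Y : Module.End ℕ (ℕ → M) := weightedShift a
  let P : Module.End ℕ (ℕ → M) := 1 + Y + Y ^ 2
  have recurrence : P u = (E ^ 3) u := by
    ext k
    simp only [P, E, Y, LinearMap.add_apply, Pi.add_apply, Module.End.one_apply,
      weightedShift_apply, weightedShift_pow_apply, one_pow, one_smul, hu]
    abel
  have commute : Commute P (E ^ 3) := by
    have hY : Commute Y (E ^ 3) := (commute_weightedShift (Commute.one_right a)).pow_right 3
    exact ((Commute.one_left _).add_left hY).add_left (hY.pow_left 2)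
  calc
    _ = (P ^ n) u 0 := by
      simp only [P, Y, one_add_self_add_sq_pow, LinearMap.sum_apply, LinearMap.smul_apply,
        Finset.sum_apply, Pi.smul_apply, weightedShift_pow_apply, zero_add, mul_smul,
        Nat.cast_smul_eq_nsmul]
    _ = ((E ^ 3) ^ n) u 0 :=
      congrFun (pow_smul_eq_pow_smul_of_commute commute recurrence n) 0
    _ = u (3 * n) := by
      rw [← pow_mul, weightedShift_pow_apply, one_pow, one_smul, zero_add]

/-- ∑_{r=0}^{n} ∑_{s=0}^{r} C(n,r)·C(r,s)·x^{r+s}·Q_{T,r+s}(x) = Q_{T,3n}(x). -/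
theorem tribonacci_quaternion_binomial_sum (x : ℝ) (n : ℕ) :
    ∑ r ∈ Finset.range (n + 1), ∑ s ∈ Finset.range (r + 1),
      ((n.choose r : ℝ) * (r.choose s : ℝ) * x ^ (r + s)) • QT x (r + s)
      = QT x (3 * n) :=
  tribonacci_quaternion_binomial_sum_general (QT_add_three x) n
end

section
/- For every real number x and every natural number n, the Tribonacci quaternion polynomials satisfy Q_{T,n+3}(x) = T_{n+2}(x)·Q_{T,2}(x) + T_{n+1}(x)·(x·Q_{T,1}(x) + Q_{T,0}(x)) + T_n(x)·Q_{T,1}(x). -/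
section ThirdOrderRecurrence

variable {R M : Type*} [CommSemiring R] [AddCommMonoid M] [Module R M] {a b c : R}

/-- The homogeneous linear recurrence of order three with coefficients `a`, `b`, `c`. Scalar
coefficients act on module-valued sequences, so that the Tribonacci polynomials and their
quaternions satisfy the same recurrence. -/
def SatisfiesThirdOrderRecurrence (a b c : R) (s : ℕ → M) : Prop :=
  ∀ n, s (n + 3) = a • s (n + 2) + b • s (n + 1) + c • s n

theorem SatisfiesThirdOrderRecurrence.shift {s : ℕ → M}
    (hs : SatisfiesThirdOrderRecurrence a b c s) :
    SatisfiesThirdOrderRecurrence a b c (fun n => s (n + 1)) :=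
  fun n => hs (n + 1)

theorem tribonacci_quaternion_via_matrix_general {t : ℕ → R}
    (ht : SatisfiesThirdOrderRecurrence a b c t) (ht0 : t 0 = 0) (ht1 : t 1 = 1) (ht2 : t 2 = a)
    {s : ℕ → M} (hs : SatisfiesThirdOrderRecurrence a b c s) (n : ℕ) :
    s (n + 3) = t (n + 2) • s 2 + t (n + 1) • (b • s 1 + c • s 0) + t n • c • s 1 := by
  -- A shift acts on `(s 0, s 1, s 2)` by the companion matrix, so the step from `n` to `n + 1`
  -- is the case `n` for the shifted sequence.
  induction n generalizing s with
  | zero =>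
    rw [hs 0, zero_add, zero_add, ht0, ht1, ht2]
    module
  | succ n ih =>
    calc s (n + 1 + 3)
        = t (n + 2) • s 3 + t (n + 1) • (b • s 2 + c • s 1) + t n • c • s 2 := ih hs.shift
      _ = t (n + 2) • (a • s 2 + b • s 1 + c • s 0) + t (n + 1) • (b • s 2 + c • s 1)
            + t n • c • s 2 := by rw [hs 0]
      _ = (a • t (n + 2) + b • t (n + 1) + c • t n) • s 2
            + t (n + 2) • (b • s 1 + c • s 0) + t (n + 1) • c • s 1 := by
          module
      _ = t (n + 3) • s 2 + t (n + 2) • (b • s 1 + c • s 0) + t (n + 1) • c • s 1 := by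
          rw [ht n]

end ThirdOrderRecurrence

theorem Trib_satisfiesThirdOrderRecurrence (x : ℝ) :
    SatisfiesThirdOrderRecurrence (x ^ 2) x 1 (Trib x) := fun n => by
  rw [Trib, smul_eq_mul, smul_eq_mul, one_smul]

theorem QT_satisfiesThirdOrderRecurrence (x : ℝ) :
    SatisfiesThirdOrderRecurrence (x ^ 2) x (1 : ℝ) (QT x) := fun n =>
  have hT := Trib_satisfiesThirdOrderRecurrence x
  Quaternion.ext _ _ (hT n) (hT (n + 1)) (hT (n + 2)) (hT (n + 3))

/-- `Q_{T,n+3}(x) = T_{n+2}(x)·Q_{T,2}(x) + T_{n+1}(x)·(x·Q_{T,1}(x)+Q_{T,0}(x)) + T_n(x)·Q_{T,1}(x)`. -/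
theorem tribonacci_quaternion_via_matrix (x : ℝ) (n : ℕ) :
    QT x (n + 3)
      = Trib x (n + 2) • QT x 2 + Trib x (n + 1) • (x • QT x 1 + QT x 0)
        + Trib x n • QT x 1 := by
  simpa only [one_smul] using
    tribonacci_quaternion_via_matrix_general (Trib_satisfiesThirdOrderRecurrence x)
      (by rw [Trib]) (by rw [Trib]) (by rw [Trib]) (QT_satisfiesThirdOrderRecurrence x) n
end
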